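/- Let μ ∈ (0,∞) and p ∈ (0,1) be fixed numbers and let F_A be a probability distribution on [0,∞) (the distribution of a nonnegative random variable A). Then the conditions E[A] = 1 and E[A²] < ∞ hold if and only if the functional equation F̂(s) = ∫₀^∞ exp(−a·(1 − F̂(ps))/p) dF_A(a) for all s ≥ 0 has exactly one solution: a probability distribution F on [0,∞) with mean μ and finite second moment. Moreover, the unique solution F satisfies Var[F] = ((Var[A] + p)/(1 − p))·μ². -/

import Mathlib

/-!
Write `φ = LS F`. The functional equation reads `φ s = LS FA ((1 - φ (p s)) / p)`, and everything
is done on the level of transforms.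

*Moments from a transform.* For a law on `[0, ∞)`, `(1 - φ s) / s` tends to the mean as `s ↓ 0`,
finite or not, because `0 ≤ (1 - e^{-sx}) / s ≤ x` with pointwise limit `x` (Fatou from below,
the bound from above). If the mean `m` is finite, `(φ s - 1 + s m) / s²` tends in the same way to
half the second moment, finite or not (`tendsto_one_sub_LS`, `tendsto_LS_second`).

*Existence of a solution determines the moments of `A`* (`moments_of_sol`). Put
`g s = (1 - φ (p s)) / p ~ μ s`. Then `(1 - LS FA (g s)) / g s = (1 - φ s) / g s → 1`, so `E[A] = 1`,
and `(LS FA (g s) - 1 + g s) / (g s)²` tends to `m₂ (1 - p) / (2 μ²)`, where `m₂` is the second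
moment of `F`. Thus `E[A²] = m₂ (1 - p) / μ²`, which is finite and is also the variance formula.

*Uniqueness* (`Sol.unique`). If `E[A] = 1` then `LS FA` is 1-Lipschitz, so for two solutions
`d s = |φ s - ψ s| / s` satisfies `d s ≤ d (p s) ≤ d (p ^ n s) → 0`, as both means equal `μ`.
A law on `[0, ∞)` is determined by its transform by Stone–Weierstrass (`ext_of_LS`).

*Existence* (`exists_sol`). The right-hand side of the equation is the transform of a mixed compound
Poisson law (`exists_step`), so the equation can be iterated from the point mass at `μ`. The bounds
`1 - μ s ≤ φ s ≤ 1 - μ s + C s²` are preserved for a suitable `C`, and the map contracts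
`sup |φ s - ψ s| / s²` by the factor `p`, so the transforms converge pointwise. The means all equal
`μ`, so the laws are tight; by Prokhorov's theorem the limit is the transform of a law
(`exists_weak_limit`). The bounds pass to the limit and yield mean `μ` and a finite second moment.
-/

open MeasureTheory

/-- Laplace–Stieltjes transform of a (nonnegative) probability distribution. -/
noncomputable def LS (F : Measure ℝ) (s : ℝ) : ℝ := ∫ x, Real.exp (-(s * x)) ∂F

/-- `F` is a solution: a probability distribution on `[0,∞)` with mean `μ`, finite second
moment, satisfying `F̂(s) = ∫₀^∞ exp(−a (1 − F̂(ps))/p) dF_A(a)` for all `s ≥ 0`. -/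
def Sol (FA : Measure ℝ) (μ p : ℝ) (F : Measure ℝ) : Prop :=
  IsProbabilityMeasure F ∧ F (Set.Iio 0) = 0 ∧ (∫ x, x ∂F) = μ ∧
  Integrable (fun x => x ^ 2) F ∧
  ∀ s : ℝ, 0 ≤ s → LS F s = ∫ a, Real.exp (-(a * ((1 - LS F (p * s)) / p))) ∂FA

open Filter Topology
open scoped NNReal ENNReal

/-! ### Bounds for Laplace transforms -/

lemma exp_neg_le_quadratic {y : ℝ} (hy : 0 ≤ y) : Real.exp (-y) ≤ 1 - y + y ^ 2 / 2 := by
  have h := Real.quadratic_le_exp_of_nonneg hy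
  rw [Real.exp_neg, inv_le_iff_one_le_mul₀ (Real.exp_pos y)]
  have h0 : 0 ≤ 1 - y + y ^ 2 / 2 := by nlinarith [sq_nonneg (y - 1)]
  calc (1 : ℝ) ≤ (1 - y + y ^ 2 / 2) * (1 + y + y ^ 2 / 2) := by nlinarith [sq_nonneg (y ^ 2)]
    _ ≤ _ := mul_le_mul_of_nonneg_left h h0

lemma one_sub_le_exp_neg (y : ℝ) : 1 - y ≤ Real.exp (-y) := by
  have := Real.add_one_le_exp (-y)
  linarith

lemma ae_nonneg_of_Iio {F : Measure ℝ} (hF : F (Set.Iio 0) = 0) : ∀ᵐ x ∂F, 0 ≤ x := by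
  rw [ae_iff]
  simpa [Set.Iio] using hF

section basic

variable {F : Measure ℝ} [IsProbabilityMeasure F] (hF : F (Set.Iio 0) = 0)
include hF

lemma integrable_exp_neg {s : ℝ} (hs : 0 ≤ s) : Integrable (fun x => Real.exp (-(s * x))) F := by
  refine Integrable.of_bound (by fun_prop) 1 ?_
  filter_upwards [ae_nonneg_of_Iio hF] with x hx
  rw [Real.norm_eq_abs, Real.abs_exp, Real.exp_le_one_iff]
  have := mul_nonneg hs hx
  linarith

lemma LS_le_one {s : ℝ} (hs : 0 ≤ s) : LS F s ≤ 1 := by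
  have : LS F s ≤ ∫ _, (1 : ℝ) ∂F := by
    refine integral_mono_ae (integrable_exp_neg hF hs) (integrable_const _) ?_
    filter_upwards [ae_nonneg_of_Iio hF] with x hx
    rw [Real.exp_le_one_iff]
    have := mul_nonneg hs hx
    linarith
  simpa using this

lemma one_sub_le_LS (hi : Integrable (fun x => x) F) {s : ℝ} (hs : 0 ≤ s) :
    1 - s * ∫ x, x ∂F ≤ LS F s := by
  have : ∫ x, (1 - s * x) ∂F ≤ LS F s :=
    integral_mono ((integrable_const _).sub (hi.const_mul s)) (integrable_exp_neg hF hs)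
      fun x => one_sub_le_exp_neg _
  rwa [integral_sub (integrable_const _) (hi.const_mul s), integral_const_mul, integral_const,
    probReal_univ, one_smul] at this

lemma LS_le_quadratic (hi : Integrable (fun x => x) F) (hi2 : Integrable (fun x => x ^ 2) F)
    {s : ℝ} (hs : 0 ≤ s) :
    LS F s ≤ 1 - s * (∫ x, x ∂F) + s ^ 2 / 2 * ∫ x, x ^ 2 ∂F := by
  have hsub : Integrable (fun x => 1 - s * x) F := (integrable_const _).sub (hi.const_mul s)
  have : LS F s ≤ ∫ x, (1 - s * x + s ^ 2 / 2 * x ^ 2) ∂F := by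
    refine integral_mono_ae (integrable_exp_neg hF hs) (hsub.add (hi2.const_mul _)) ?_
    filter_upwards [ae_nonneg_of_Iio hF] with x hx
    have := exp_neg_le_quadratic (mul_nonneg hs hx)
    linarith
  rwa [integral_add hsub (hi2.const_mul _),
    integral_sub (integrable_const _) (hi.const_mul s), integral_const_mul, integral_const_mul,
    integral_const, probReal_univ, one_smul] at this

/-- Together with `LS_anti`: the transform is decreasing and Lipschitz on `[0, ∞)`, with the mean
as constant. -/
lemma LS_sub_le (hi : Integrable (fun x => x) F) {g h : ℝ} (hg : 0 ≤ g) (hgh : g ≤ h) :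
    LS F g - LS F h ≤ (h - g) * ∫ x, x ∂F := by
  have h0 : 0 ≤ h := hg.trans hgh
  unfold LS
  rw [← integral_sub (integrable_exp_neg hF hg) (integrable_exp_neg hF h0), ← integral_const_mul]
  refine integral_mono_ae ((integrable_exp_neg hF hg).sub (integrable_exp_neg hF h0))
    (hi.const_mul _) ?_
  filter_upwards [ae_nonneg_of_Iio hF] with x hx
  have e : Real.exp (-(h * x)) = Real.exp (-(g * x)) * Real.exp (-((h - g) * x)) := by
    rw [← Real.exp_add]; congr 1; ring
  have h1 := one_sub_le_exp_neg ((h - g) * x)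
  have h2 : Real.exp (-(g * x)) ≤ 1 := by
    rw [Real.exp_le_one_iff]
    have := mul_nonneg hg hx
    linarith
  have h3 := Real.exp_pos (-(g * x))
  have h4 : 0 ≤ (h - g) * x := mul_nonneg (by linarith) hx
  simp only [e]
  nlinarith

lemma LS_anti {g h : ℝ} (hg : 0 ≤ g) (hgh : g ≤ h) : LS F h ≤ LS F g := by
  refine integral_mono_ae (integrable_exp_neg hF (hg.trans hgh)) (integrable_exp_neg hF hg) ?_
  filter_upwards [ae_nonneg_of_Iio hF] with x hx
  have := mul_le_mul_of_nonneg_right hgh hx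
  exact Real.exp_le_exp.2 (by linarith)

lemma abs_LS_sub_le (hi : Integrable (fun x => x) F) {g h : ℝ} (hg : 0 ≤ g) (hh : 0 ≤ h) :
    |LS F g - LS F h| ≤ |g - h| * ∫ x, x ∂F := by
  rcases le_total g h with hgh | hgh
  · rw [abs_of_nonneg (sub_nonneg.2 (LS_anti hF hg hgh)), abs_sub_comm,
      abs_of_nonneg (sub_nonneg.2 hgh)]
    exact LS_sub_le hF hi hg hgh
  · rw [abs_sub_comm, abs_of_nonneg (sub_nonneg.2 (LS_anti hF hh hgh)),
      abs_of_nonneg (sub_nonneg.2 hgh)]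
    exact LS_sub_le hF hi hh hgh

end basic

/-! ### Moments as limits of the transform at zero -/

/-- If `f n ≤ g` and `f n → g` almost everywhere, the integrals converge, even when `g` has infinite
integral: Fatou bounds the limit inferior from below. -/
lemma tendsto_lintegral_of_ae_le_of_tendsto {F : Measure ℝ} {f : ℕ → ℝ → ℝ≥0∞} {g : ℝ → ℝ≥0∞}
    (hf : ∀ n, Measurable (f n)) (hle : ∀ᶠ n in atTop, ∀ᵐ x ∂F, f n x ≤ g x)
    (hlim : ∀ᵐ x ∂F, Tendsto (fun n => f n x) atTop (𝓝 (g x))) :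
    Tendsto (fun n => ∫⁻ x, f n x ∂F) atTop (𝓝 (∫⁻ x, g x ∂F)) := by
  refine tendsto_of_le_liminf_of_limsup_le ?_ ?_
  · calc ∫⁻ x, g x ∂F = ∫⁻ x, liminf (fun n => f n x) atTop ∂F := by
          refine lintegral_congr_ae ?_
          filter_upwards [hlim] with x hx using hx.liminf_eq.symm
      _ ≤ _ := lintegral_liminf_le hf
  · refine limsup_le_of_le (by isBoundedDefault) ?_
    filter_upwards [hle] with n hn using lintegral_mono_ae hn

/-- The mean, possibly infinite, as the derivative of the transform at zero. -/
lemma tendsto_one_sub_LS {F : Measure ℝ} [IsProbabilityMeasure F] (hF : F (Set.Iio 0) = 0)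
    {s : ℕ → ℝ} (hs : Tendsto s atTop (𝓝[>] 0)) :
    Tendsto (fun n => ENNReal.ofReal ((1 - LS F (s n)) / s n)) atTop
      (𝓝 (∫⁻ x, ENNReal.ofReal x ∂F)) := by
  have hs0 : Tendsto s atTop (𝓝 0) := hs.mono_right nhdsWithin_le_nhds
  have hpos : ∀ᶠ n in atTop, 0 < s n := hs.eventually self_mem_nhdsWithin
  have key : Tendsto (fun n => ∫⁻ x, ENNReal.ofReal ((1 - Real.exp (-(s n * x))) / s n) ∂F) atTop
      (𝓝 (∫⁻ x, ENNReal.ofReal x ∂F)) := by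
    refine tendsto_lintegral_of_ae_le_of_tendsto (fun n => by fun_prop) ?_ ?_
    · filter_upwards [hpos] with n hn
      refine Eventually.of_forall fun x => ENNReal.ofReal_le_ofReal ?_
      rw [div_le_iff₀ hn]
      have := one_sub_le_exp_neg (s n * x)
      linarith
    · filter_upwards [ae_nonneg_of_Iio hF] with x hx
      refine ENNReal.tendsto_ofReal ?_
      refine tendsto_of_tendsto_of_tendsto_of_le_of_le' (g := fun n => x - s n * (x ^ 2 / 2))
        (h := fun _ => x) ?_ tendsto_const_nhds ?_ ?_
      · simpa using (hs0.mul_const (x ^ 2 / 2)).const_sub x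
      · filter_upwards [hpos] with n hn
        rw [le_div_iff₀ hn]
        have := exp_neg_le_quadratic (mul_nonneg hn.le hx)
        linarith
      · filter_upwards [hpos] with n hn
        rw [div_le_iff₀ hn]
        have := one_sub_le_exp_neg (s n * x)
        linarith
  refine key.congr' ?_
  filter_upwards [hpos] with n hn
  have hi := integrable_exp_neg hF hn.le
  rw [← ofReal_integral_eq_lintegral_ofReal]
  · rw [integral_div, integral_sub (integrable_const _) hi]
    simp [LS]
  · exact ((integrable_const _).sub hi).div_const _
  · filter_upwards [ae_nonneg_of_Iio hF] with x hx
    have := mul_nonneg hn.le hx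
    have : Real.exp (-(s n * x)) ≤ 1 := by rw [Real.exp_le_one_iff]; linarith
    exact div_nonneg (by linarith) hn.le

/-- Half the second moment, possibly infinite, as the second-order coefficient of the transform at
zero. -/
lemma tendsto_LS_second {F : Measure ℝ} [IsProbabilityMeasure F] (hF : F (Set.Iio 0) = 0)
    (hi : Integrable (fun x => x) F)
    {s : ℕ → ℝ} (hs : Tendsto s atTop (𝓝[>] 0)) :
    Tendsto (fun n => ENNReal.ofReal ((LS F (s n) - 1 + s n * ∫ x, x ∂F) / s n ^ 2)) atTop
      (𝓝 (∫⁻ x, ENNReal.ofReal (x ^ 2 / 2) ∂F)) := by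
  have hs0 : Tendsto s atTop (𝓝 0) := hs.mono_right nhdsWithin_le_nhds
  have hpos : ∀ᶠ n in atTop, 0 < s n := hs.eventually self_mem_nhdsWithin
  have key : Tendsto (fun n => ∫⁻ x, ENNReal.ofReal
      ((Real.exp (-(s n * x)) - 1 + s n * x) / s n ^ 2) ∂F) atTop
      (𝓝 (∫⁻ x, ENNReal.ofReal (x ^ 2 / 2) ∂F)) := by
    refine tendsto_lintegral_of_ae_le_of_tendsto (fun n => by fun_prop) ?_ ?_
    · filter_upwards [hpos] with n hn
      filter_upwards [ae_nonneg_of_Iio hF] with x hx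
      refine ENNReal.ofReal_le_ofReal ?_
      rw [div_le_iff₀ (by positivity)]
      have := exp_neg_le_quadratic (mul_nonneg hn.le hx)
      linarith
    · filter_upwards [ae_nonneg_of_Iio hF] with x hx
      refine ENNReal.tendsto_ofReal ?_
      have hsx : ∀ᶠ n in atTop, s n * x < 1 := by
        have : Tendsto (fun n => s n * x) atTop (𝓝 0) := by simpa using hs0.mul_const x
        exact this.eventually_lt_const one_pos
      refine tendsto_of_tendsto_of_tendsto_of_le_of_le'
        (g := fun n => x ^ 2 / 2 - s n * x ^ 3) (h := fun _ => x ^ 2 / 2) ?_ tendsto_const_nhds ?_ ?_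
      · simpa using (hs0.mul_const (x ^ 3)).const_sub (x ^ 2 / 2)
      · filter_upwards [hpos, hsx] with n hn hn1
        rw [le_div_iff₀ (by positivity)]
        have h0 := mul_nonneg hn.le hx
        have := Real.exp_bound (x := -(s n * x)) (by rw [abs_neg, abs_of_nonneg h0]; exact hn1.le)
          (n := 3) (by norm_num)
        rw [abs_neg, abs_of_nonneg h0] at this
        have := (abs_le.1 this).1
        norm_num [Finset.sum_range_succ, Nat.factorial] at this
        nlinarith [pow_nonneg h0 3]
      · filter_upwards [hpos] with n hn
        rw [div_le_iff₀ (by positivity)]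
        have := exp_neg_le_quadratic (mul_nonneg hn.le hx)
        linarith
  refine key.congr' ?_
  filter_upwards [hpos] with n hn
  have hie := integrable_exp_neg hF hn.le
  have hsub : Integrable (fun x => Real.exp (-(s n * x)) - 1) F := hie.sub (integrable_const _)
  rw [← ofReal_integral_eq_lintegral_ofReal]
  · rw [integral_div, integral_add hsub (hi.const_mul _),
      integral_sub hie (integrable_const _), integral_const_mul]
    simp [LS]
  · exact (hsub.add (hi.const_mul _)).div_const _
  · refine Eventually.of_forall fun x => ?_
    have := one_sub_le_exp_neg (s n * x)
    exact div_nonneg (by linarith) (by positivity)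

/-! ### Moments forced by a solution -/

lemma Sol.integrable_id {FA : Measure ℝ} {μ p : ℝ} {F : Measure ℝ} (h : Sol FA μ p F) :
    Integrable (fun x => x) F := by
  obtain ⟨hP, -, -, h2, -⟩ := h
  have : MemLp (fun x : ℝ => x) 2 F := (memLp_two_iff_integrable_sq (by fun_prop)).2 h2
  exact this.integrable (by norm_num)

/-- The functional equation, with its right-hand side read as a value of the transform of `FA`. -/
lemma Sol.LS_eq {FA : Measure ℝ} {μ p : ℝ} {F : Measure ℝ} (h : Sol FA μ p F) {s : ℝ}
    (hs : 0 ≤ s) : LS F s = LS FA ((1 - LS F (p * s)) / p) := by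
  rw [h.2.2.2.2 s hs]
  simp only [LS, mul_comm]

lemma tendsto_of_ofReal {u : ℕ → ℝ} {c : ℝ} (hc : 0 ≤ c) (hu : ∀ᶠ n in atTop, 0 ≤ u n)
    (h : Tendsto (fun n => ENNReal.ofReal (u n)) atTop (𝓝 (ENNReal.ofReal c))) :
    Tendsto u atTop (𝓝 c) := by
  have := (ENNReal.tendsto_toReal ENNReal.ofReal_ne_top).comp h
  rw [ENNReal.toReal_ofReal hc] at this
  refine this.congr' ?_
  filter_upwards [hu] with n hn using ENNReal.toReal_ofReal hn

section limits

variable {F : Measure ℝ} [IsProbabilityMeasure F] (hF : F (Set.Iio 0) = 0)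
include hF

lemma tendsto_one_sub_LS_real (hi : Integrable (fun x => x) F)
    {s : ℕ → ℝ} (hs : Tendsto s atTop (𝓝[>] 0)) :
    Tendsto (fun n => (1 - LS F (s n)) / s n) atTop (𝓝 (∫ x, x ∂F)) := by
  refine tendsto_of_ofReal (integral_nonneg_of_ae (ae_nonneg_of_Iio hF)) ?_ ?_
  · filter_upwards [hs.eventually self_mem_nhdsWithin] with n hn
    have hn' : 0 < s n := hn
    exact div_nonneg (by linarith [LS_le_one hF hn'.le]) hn'.le
  · rw [ofReal_integral_eq_lintegral_ofReal hi (ae_nonneg_of_Iio hF)]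
    exact tendsto_one_sub_LS hF hs

lemma tendsto_LS_second_real (hi : Integrable (fun x => x) F) (hi2 : Integrable (fun x => x ^ 2) F)
    {s : ℕ → ℝ} (hs : Tendsto s atTop (𝓝[>] 0)) :
    Tendsto (fun n => (LS F (s n) - 1 + s n * ∫ x, x ∂F) / s n ^ 2) atTop
      (𝓝 ((∫ x, x ^ 2 ∂F) / 2)) := by
  have h0 : 0 ≤ ∫ x, x ^ 2 ∂F := integral_nonneg fun x => sq_nonneg x
  refine tendsto_of_ofReal (by positivity) ?_ ?_
  · filter_upwards [hs.eventually self_mem_nhdsWithin] with n hn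
    have hn' : 0 < s n := hn
    exact div_nonneg (by linarith [one_sub_le_LS hF hi hn'.le]) (by positivity)
  · rw [← integral_div, ofReal_integral_eq_lintegral_ofReal (hi2.div_const 2)
      (Eventually.of_forall fun x => by positivity)]
    exact tendsto_LS_second hF hi hs

end limits

lemma integrable_of_lintegral_lt_top {F : Measure ℝ} {f : ℝ → ℝ} (hf : Measurable f)
    (h0 : ∀ᵐ x ∂F, 0 ≤ f x) (h : ∫⁻ x, ENNReal.ofReal (f x) ∂F < ⊤) : Integrable f F :=
  ⟨hf.aestronglyMeasurable, (hasFiniteIntegral_iff_ofReal h0).2 h⟩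

lemma tendsto_one_div_succ : Tendsto (fun n : ℕ => 1 / ((n : ℝ) + 1)) atTop (𝓝[>] 0) :=
  tendsto_nhdsWithin_iff.2 ⟨tendsto_one_div_add_atTop_nhds_zero_nat,
    Eventually.of_forall fun n => by simp only [Set.mem_Ioi]; positivity⟩

/-- A single solution forces `E[A] = 1`, and determines `E[A²]` by comparing the expansions of both
sides of the functional equation at zero to second order. -/
lemma moments_of_sol {μ p : ℝ} (hμ : 0 < μ) (hp : 0 < p)
    {FA : Measure ℝ} [IsProbabilityMeasure FA] (hA : FA (Set.Iio 0) = 0) {F : Measure ℝ}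
    (h : Sol FA μ p F) :
    (∫⁻ a, ENNReal.ofReal a ∂FA) = 1 ∧
    (∫⁻ a, ENNReal.ofReal (a ^ 2 / 2) ∂FA) =
      ENNReal.ofReal ((∫ x, x ^ 2 ∂F) * (1 - p) / (2 * μ ^ 2)) := by
  have hi := h.integrable_id
  have heq := fun {s : ℝ} (hs : 0 ≤ s) => h.LS_eq hs
  obtain ⟨hP, hF, hm, hi2, -⟩ := h
  obtain ⟨s, hs⟩ : ∃ s : ℕ → ℝ, Tendsto s atTop (𝓝[>] 0) := ⟨_, tendsto_one_div_succ⟩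
  have hpos : ∀ᶠ n in atTop, 0 < s n := hs.eventually self_mem_nhdsWithin
  have hs0 : Tendsto s atTop (𝓝 0) := hs.mono_right nhdsWithin_le_nhds
  have hps : Tendsto (fun n => p * s n) atTop (𝓝[>] 0) := by
    refine tendsto_nhdsWithin_iff.2 ⟨by simpa using hs0.const_mul p, ?_⟩
    filter_upwards [hpos] with n hn using mul_pos hp hn
  have f1 := tendsto_one_sub_LS_real hF hi hs
  have f2 := tendsto_one_sub_LS_real hF hi hps
  have s1 := tendsto_LS_second_real hF hi hi2 hs
  have s2 := tendsto_LS_second_real hF hi hi2 hps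
  rw [hm] at f1 f2
  simp only [hm] at s1 s2
  set m2 := ∫ x, x ^ 2 ∂F with hm2
  -- `g n` is the argument of the transform of `FA`; it is asymptotic to `μ * s n`
  set g : ℕ → ℝ := fun n => (1 - LS F (p * s n)) / p with hg
  have hgs : Tendsto (fun n => g n / s n) atTop (𝓝 μ) := by
    refine f2.congr fun n => ?_
    simp only [hg]; rw [div_div]
  have hgpos : ∀ᶠ n in atTop, 0 < g n := by
    filter_upwards [hpos, hgs.eventually_const_lt hμ] with n hn h1
    exact (div_pos_iff_of_pos_right hn).1 h1
  have hg0 : Tendsto g atTop (𝓝[>] 0) := by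
    refine tendsto_nhdsWithin_iff.2 ⟨?_, hgpos⟩
    have := hgs.mul hs0
    rw [mul_zero] at this
    refine this.congr' ?_
    filter_upwards [hpos] with n hn
    field_simp
  have hEA : (∫⁻ a, ENNReal.ofReal a ∂FA) = 1 := by
    refine tendsto_nhds_unique (tendsto_one_sub_LS hA hg0) ?_
    have : Tendsto (fun n => (1 - LS FA (g n)) / g n) atTop (𝓝 1) := by
      have := f1.div hgs hμ.ne'
      rw [div_self hμ.ne'] at this
      refine this.congr' ?_
      filter_upwards [hpos, hgpos] with n hn hgn
      simp only [Pi.div_apply]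
      rw [heq hn.le]
      change (1 - LS FA (g n)) / s n / (g n / s n) = _
      field_simp
    simpa using ENNReal.tendsto_ofReal this
  refine ⟨hEA, ?_⟩
  have hiA : Integrable (fun a => a) FA :=
    integrable_of_lintegral_lt_top measurable_id (ae_nonneg_of_Iio hA) (by simp [hEA])
  have hEA' : ∫ a, a ∂FA = 1 := by
    rw [integral_eq_lintegral_of_nonneg_ae (ae_nonneg_of_Iio hA) (by fun_prop), hEA]; simp
  have t := tendsto_LS_second hA hiA hg0
  simp only [hEA', mul_one] at t
  refine tendsto_nhds_unique t (ENNReal.tendsto_ofReal ?_)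
  have := (s1.sub (s2.const_mul p)).div (hgs.pow 2) (by positivity)
  have e : (m2 / 2 - p * (m2 / 2)) / μ ^ 2 = m2 * (1 - p) / (2 * μ ^ 2) := by
    field_simp
  rw [e] at this
  refine this.congr' ?_
  filter_upwards [hpos, hgpos] with n hn hgn
  simp only [Pi.div_apply]
  rw [heq hn.le]
  change ((LS FA (g n) - 1 + s n * μ) / s n ^ 2 -
    p * ((LS F (p * s n) - 1 + p * s n * μ) / (p * s n) ^ 2)) / (g n / s n) ^ 2 = _
  have e2 : LS F (p * s n) = 1 - p * g n := by simp only [hg]; field_simp; ring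
  rw [e2]
  field_simp
  ring

/-! ### Uniqueness -/

open BoundedContinuousFunction in
/-- The values of the transform at the natural numbers determine a finite measure on `ℝ≥0`: the
algebra generated by `x ↦ exp (-x)` separates points, and its elements are combinations of
`x ↦ exp (-n x)`. -/
lemma ext_of_LS_nnreal {F G : Measure ℝ≥0} [IsFiniteMeasure F] [IsFiniteMeasure G]
    (h : ∀ n : ℕ, ∫ x : ℝ≥0, Real.exp (-(n * x)) ∂F = ∫ x : ℝ≥0, Real.exp (-(n * x)) ∂G) :
    F = G := by
  let f : ℝ≥0 →ᵇ ℝ := BoundedContinuousFunction.ofNormedAddCommGroup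
    (fun x : ℝ≥0 => Real.exp (-(x : ℝ))) (by fun_prop) 1 (fun x => by simp)
  let A : StarSubalgebra ℝ (ℝ≥0 →ᵇ ℝ) :=
    { Algebra.adjoin ℝ {f} with
      star_mem' := fun {a} ha => by
        have : star a = a := by ext x; simp
        simpa only [this] using ha }
  refine ext_of_forall_mem_subalgebra_integral_eq_of_polish (A := A) ?_ ?_
  · intro x y hxy
    refine ⟨f, ⟨toContinuousMapStarₐ ℝ f, ⟨f, Algebra.subset_adjoin rfl, rfl⟩, rfl⟩, ?_⟩
    simpa [f] using hxy
  · intro g hg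
    have hg' : g ∈ Algebra.adjoin ℝ {f} := hg
    rw [← Subalgebra.mem_toSubmodule, Algebra.adjoin_eq_span] at hg'
    refine Submodule.span_induction ?_ ?_ ?_ ?_ hg'
    · intro u hu
      obtain ⟨n, rfl⟩ := Submonoid.mem_closure_singleton.1 hu
      simpa [f, ← Real.exp_nat_mul] using h n
    · simp
    · intro u v _ _ hu hv
      simp only [BoundedContinuousFunction.coe_add, Pi.add_apply]
      rw [integral_add (u.integrable F) (v.integrable F),
        integral_add (u.integrable G) (v.integrable G), hu, hv]
    · intro c u _ hu
      simp only [BoundedContinuousFunction.coe_smul]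
      rw [integral_smul, integral_smul, hu]

lemma LS_map_coe (F : Measure ℝ≥0) (s : ℝ) :
    LS (F.map ((↑) : ℝ≥0 → ℝ)) s = ∫ x : ℝ≥0, Real.exp (-(s * x)) ∂F := by
  unfold LS
  rw [integral_map (by fun_prop) (by fun_prop)]

lemma map_coe_map_toNNReal {F : Measure ℝ} (hF : F (Set.Iio 0) = 0) :
    (F.map Real.toNNReal).map ((↑) : ℝ≥0 → ℝ) = F := by
  rw [Measure.map_map (by fun_prop) (by fun_prop)]
  conv_rhs => rw [← Measure.map_id (μ := F)]
  refine Measure.map_congr ?_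
  filter_upwards [ae_nonneg_of_Iio hF] with x hx
  simp [hx]

lemma ext_of_LS {F G : Measure ℝ} [IsProbabilityMeasure F] [IsProbabilityMeasure G]
    (hF : F (Set.Iio 0) = 0) (hG : G (Set.Iio 0) = 0) (h : ∀ s, 0 ≤ s → LS F s = LS G s) :
    F = G := by
  rw [← map_coe_map_toNNReal hF, ← map_coe_map_toNNReal hG]
  congr 1
  refine ext_of_LS_nnreal fun n => ?_
  rw [← LS_map_coe, ← LS_map_coe, map_coe_map_toNNReal hF, map_coe_map_toNNReal hG]
  exact h n (by positivity)

/-- Two solutions have transforms whose difference, divided by `s`, does not decrease from `s` to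
`p * s` and tends to zero at zero. -/
lemma Sol.unique {μ p : ℝ} (hp : 0 < p) (hp1 : p < 1)
    {FA : Measure ℝ} [IsProbabilityMeasure FA] (hA : FA (Set.Iio 0) = 0)
    (hiA : Integrable (fun a => a) FA) (hEA : ∫ a, a ∂FA = 1) {F G : Measure ℝ}
    (hF : Sol FA μ p F) (hG : Sol FA μ p G) : F = G := by
  have hiF := hF.integrable_id
  have hiG := hG.integrable_id
  have eqF := fun {s : ℝ} (hs : 0 ≤ s) => hF.LS_eq hs
  have eqG := fun {s : ℝ} (hs : 0 ≤ s) => hG.LS_eq hs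
  obtain ⟨hPF, hF0, hmF, -, -⟩ := hF
  obtain ⟨hPG, hG0, hmG, -, -⟩ := hG
  refine ext_of_LS hF0 hG0 fun s hs => ?_
  rcases hs.eq_or_lt with rfl | hs
  · simp [LS]
  have step : ∀ t : ℝ, 0 < t →
      |LS F t - LS G t| / t ≤ |LS F (p * t) - LS G (p * t)| / (p * t) := by
    intro t ht
    have hpt : 0 ≤ p * t := by positivity
    rw [eqF ht.le, eqG ht.le]
    have := abs_LS_sub_le hA hiA (g := (1 - LS F (p * t)) / p) (h := (1 - LS G (p * t)) / p)
      (div_nonneg (by linarith [LS_le_one hF0 hpt]) hp.le)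
      (div_nonneg (by linarith [LS_le_one hG0 hpt]) hp.le)
    rw [hEA, mul_one, ← sub_div, abs_div, abs_of_pos hp, sub_sub_sub_cancel_left,
      abs_sub_comm (LS G _)] at this
    rw [← div_div]
    gcongr
  have iter : ∀ n : ℕ, |LS F s - LS G s| / s ≤
      |LS F (p ^ n * s) - LS G (p ^ n * s)| / (p ^ n * s) := by
    intro n
    induction n with
    | zero => simp
    | succ n ih =>
      refine ih.trans ((step _ (by positivity)).trans_eq ?_)
      rw [pow_succ', mul_assoc]
  have hsn : Tendsto (fun n : ℕ => p ^ n * s) atTop (𝓝[>] 0) := by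
    refine tendsto_nhdsWithin_iff.2 ⟨?_, Eventually.of_forall fun n => ?_⟩
    · simpa using (tendsto_pow_atTop_nhds_zero_of_lt_one hp.le hp1).mul_const s
    · simp only [Set.mem_Ioi]; positivity
  have lim : Tendsto (fun n : ℕ => |LS F (p ^ n * s) - LS G (p ^ n * s)| / (p ^ n * s)) atTop
      (𝓝 0) := by
    have := ((tendsto_one_sub_LS_real hG0 hiG hsn).sub (tendsto_one_sub_LS_real hF0 hiF hsn)).abs
    rw [hmF, hmG, sub_self, abs_zero] at this
    refine this.congr fun n => ?_
    rw [← sub_div, abs_div, abs_of_pos (a := p ^ n * s) (by positivity), sub_sub_sub_cancel_left]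
  have h0 : |LS F s - LS G s| / s ≤ 0 := ge_of_tendsto' lim iter
  have h1 : |LS F s - LS G s| ≤ 0 := by
    rwa [div_le_iff₀ hs, zero_mul] at h0
  exact sub_eq_zero.1 (abs_nonpos_iff.1 h1)

/-! ### One step of the iteration: mixed compound Poisson laws -/

/-- The Laplace transform of a measure on `ℝ≥0`, with values in `[0, ∞]`. -/
noncomputable def lap (F : Measure ℝ≥0) (s : ℝ) : ℝ≥0∞ :=
  ∫⁻ x : ℝ≥0, ENNReal.ofReal (Real.exp (-(s * x))) ∂F

lemma map_coe_Iio (F : Measure ℝ≥0) : F.map ((↑) : ℝ≥0 → ℝ) (Set.Iio 0) = 0 := by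
  rw [Measure.map_apply (by fun_prop) measurableSet_Iio]
  convert measure_empty (μ := F)
  ext x
  simp

instance isProbabilityMeasure_map_coe (F : Measure ℝ≥0) [IsProbabilityMeasure F] :
    IsProbabilityMeasure (F.map ((↑) : ℝ≥0 → ℝ)) :=
  Measure.isProbabilityMeasure_map (by fun_prop)

lemma lap_eq (F : Measure ℝ≥0) [IsProbabilityMeasure F] {s : ℝ} (hs : 0 ≤ s) :
    lap F s = ENNReal.ofReal (LS (F.map ((↑) : ℝ≥0 → ℝ)) s) := by
  unfold LS
  rw [ofReal_integral_eq_lintegral_ofReal (integrable_exp_neg (map_coe_Iio F) hs)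
    (Eventually.of_forall fun _ => (Real.exp_pos _).le), lintegral_map (by fun_prop) (by fun_prop)]
  rfl

lemma lap_zero (F : Measure ℝ≥0) : lap F 0 = F Set.univ := by simp [lap]

lemma lap_conv (F G : Measure ℝ≥0) [SFinite G] (s : ℝ) :
    lap (F.conv G) s = lap F s * lap G s := by
  unfold lap
  rw [Measure.lintegral_conv (by fun_prop)]
  have : ∀ x y : ℝ≥0, ENNReal.ofReal (Real.exp (-(s * ((x + y : ℝ≥0) : ℝ)))) =
      ENNReal.ofReal (Real.exp (-(s * x))) * ENNReal.ofReal (Real.exp (-(s * y))) := by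
    intro x y
    rw [← ENNReal.ofReal_mul (Real.exp_pos _).le, ← Real.exp_add]
    push_cast
    ring_nf
  simp_rw [this]
  rw [← lintegral_mul_const _ (by fun_prop)]
  refine lintegral_congr fun x => ?_
  rw [lintegral_const_mul _ (by fun_prop)]

/-- Iterated convolution `F ∗ ⋯ ∗ F` with `n` factors: the law of a sum of `n` independent
copies. -/
noncomputable def convPow (F : Measure ℝ≥0) : ℕ → Measure ℝ≥0
  | 0 => Measure.dirac 0
  | n + 1 => F.conv (convPow F n)

instance isProbabilityMeasure_convPow (F : Measure ℝ≥0) [IsProbabilityMeasure F] (n : ℕ) :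
    IsProbabilityMeasure (convPow F n) := by
  induction n with
  | zero => unfold convPow; infer_instance
  | succ n ih => unfold convPow; infer_instance

lemma lap_convPow (F : Measure ℝ≥0) [IsProbabilityMeasure F] (n : ℕ) (s : ℝ) :
    lap (convPow F n) s = lap F s ^ n := by
  induction n with
  | zero => simp [convPow, lap]
  | succ n ih => rw [convPow, lap_conv, ih, pow_succ']

lemma lap_map_mul (F : Measure ℝ≥0) {p : ℝ} (hp : 0 < p) (s : ℝ) :
    lap (F.map fun x => p.toNNReal * x) s = lap F (p * s) := by
  unfold lap
  rw [lintegral_map (by fun_prop) (by fun_prop)]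
  refine lintegral_congr fun x => ?_
  rw [NNReal.coe_mul, Real.coe_toNNReal _ hp.le]
  ring_nf

/-- The law `G` is that of a sum of `N` independent copies of `p X`, with `X ~ F` and `N` Poisson
of parameter `A / p` given `A`; the weight of `n` terms is `c n = E[e^{-A/p} (A/p)^n / n!]`. -/
lemma exists_step {p : ℝ} (hp : 0 < p) {FA : Measure ℝ} [IsProbabilityMeasure FA]
    (hA : FA (Set.Iio 0) = 0) (F : ProbabilityMeasure ℝ≥0) :
    ∃ G : ProbabilityMeasure ℝ≥0, ∀ s : ℝ, 0 ≤ s →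
      LS ((G : Measure ℝ≥0).map (↑)) s =
        LS FA ((1 - LS ((F : Measure ℝ≥0).map (↑)) (p * s)) / p) := by
  let K : Measure ℝ≥0 := (F : Measure ℝ≥0).map fun x => p.toNNReal * x
  have hK : IsProbabilityMeasure K := Measure.isProbabilityMeasure_map (by fun_prop)
  let w : ℕ → ℝ → ℝ := fun n a => Real.exp (-(a / p)) * ((a / p) ^ n / n.factorial)
  let c : ℕ → ℝ≥0∞ := fun n => ∫⁻ a, ENNReal.ofReal (w n a) ∂FA
  let G : Measure ℝ≥0 := Measure.sum fun n => c n • convPow K n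
  have hG : ∀ s : ℝ, 0 ≤ s → lap G s =
      ENNReal.ofReal (LS FA ((1 - LS ((F : Measure ℝ≥0).map (↑)) (p * s)) / p)) := by
    intro s hs
    have hps : 0 ≤ p * s := by positivity
    set r := LS ((F : Measure ℝ≥0).map (↑)) (p * s) with hr
    have hr0 : 0 ≤ r := integral_nonneg fun _ => (Real.exp_pos _).le
    have hr1 : r ≤ 1 := LS_le_one (map_coe_Iio _) hps
    have h1 : lap G s = ∑' n, c n * ENNReal.ofReal r ^ n := by
      unfold lap
      rw [lintegral_sum_measure]
      congr with n
      rw [lintegral_smul_measure, smul_eq_mul]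
      change c n * lap (convPow K n) s = _
      rw [lap_convPow, lap_map_mul _ hp, lap_eq _ hps]
    have h2 : ∀ n, c n * ENNReal.ofReal r ^ n = ∫⁻ a, ENNReal.ofReal (w n a * r ^ n) ∂FA := by
      intro n
      rw [← ENNReal.ofReal_pow hr0, ← lintegral_mul_const _ (by fun_prop)]
      refine lintegral_congr fun a => ?_
      exact (ENNReal.ofReal_mul' (pow_nonneg hr0 n)).symm
    rw [h1]
    simp_rw [h2]
    rw [← lintegral_tsum (fun n => by fun_prop)]
    unfold LS
    rw [ofReal_integral_eq_lintegral_ofReal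
      (integrable_exp_neg hA (div_nonneg (by linarith) hp.le))
      (Eventually.of_forall fun _ => (Real.exp_pos _).le)]
    refine lintegral_congr_ae ?_
    filter_upwards [ae_nonneg_of_Iio hA] with a ha
    have hs : HasSum (fun n => w n a * r ^ n) (Real.exp (-((1 - r) / p * a))) := by
      have e := (NormedSpace.expSeries_div_hasSum_exp (𝔸 := ℝ) (a / p * r)).mul_left
        (Real.exp (-(a / p)))
      rw [← Real.exp_eq_exp_ℝ, ← Real.exp_add] at e
      have e1 : (fun n => w n a * r ^ n) =
          fun n => Real.exp (-(a / p)) * ((a / p * r) ^ n / n.factorial) := by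
        ext n
        simp only [w, mul_pow]; ring
      have e2 : -((1 - r) / p * a) = -(a / p) + a / p * r := by ring
      rwa [e1, e2]
    rw [← hs.tsum_eq, ENNReal.ofReal_tsum_of_nonneg (fun n => by positivity) hs.summable]
  have hG1 : IsProbabilityMeasure G := ⟨by
    rw [← lap_zero, hG 0 le_rfl]
    simp [LS]⟩
  refine ⟨⟨G, hG1⟩, fun s hs => ?_⟩
  have := hG s hs
  rw [lap_eq _ hs, ENNReal.ofReal_eq_ofReal_iff] at this
  · exact this
  all_goals exact integral_nonneg fun _ => (Real.exp_pos _).le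

/-! ### Existence -/

/-- Quadratic bounds on the transform near its tangent `1 - μ s` give mean `μ` and a finite second
moment. -/
lemma moments_of_LS_bounds {F : Measure ℝ} [IsProbabilityMeasure F] (hF : F (Set.Iio 0) = 0)
    {μ C : ℝ} (hμ : 0 ≤ μ) (h1 : ∀ s, 0 ≤ s → 1 - μ * s ≤ LS F s)
    (h2 : ∀ s, 0 ≤ s → LS F s ≤ 1 - μ * s + C * s ^ 2) :
    (∫⁻ x, ENNReal.ofReal x ∂F) = ENNReal.ofReal μ ∧ ∫ x, x ∂F = μ ∧
      Integrable (fun x => x ^ 2) F := by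
  obtain ⟨s, hs⟩ : ∃ s : ℕ → ℝ, Tendsto s atTop (𝓝[>] 0) := ⟨_, tendsto_one_div_succ⟩
  have hpos : ∀ᶠ n in atTop, 0 < s n := hs.eventually self_mem_nhdsWithin
  have hs0 : Tendsto s atTop (𝓝 0) := hs.mono_right nhdsWithin_le_nhds
  have hm : (∫⁻ x, ENNReal.ofReal x ∂F) = ENNReal.ofReal μ := by
    refine tendsto_nhds_unique (tendsto_one_sub_LS hF hs) (ENNReal.tendsto_ofReal ?_)
    refine tendsto_of_tendsto_of_tendsto_of_le_of_le' (g := fun n => μ - C * s n)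
      (h := fun _ => μ) ?_ tendsto_const_nhds ?_ ?_
    · simpa using (hs0.const_mul C).const_sub μ
    · filter_upwards [hpos] with n hn
      rw [le_div_iff₀ hn]
      linarith [h2 _ hn.le]
    · filter_upwards [hpos] with n hn
      rw [div_le_iff₀ hn]
      linarith [h1 _ hn.le]
  have hi : Integrable (fun x => x) F :=
    integrable_of_lintegral_lt_top measurable_id (ae_nonneg_of_Iio hF) (by simp [hm])
  have hm' : ∫ x, x ∂F = μ := by
    rw [integral_eq_lintegral_of_nonneg_ae (ae_nonneg_of_Iio hF) (by fun_prop), hm,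
      ENNReal.toReal_ofReal hμ]
  refine ⟨hm, hm', ?_⟩
  have t := tendsto_LS_second hF hi hs
  have hle : ∫⁻ x, ENNReal.ofReal (x ^ 2 / 2) ∂F ≤ ENNReal.ofReal C := by
    refine le_of_tendsto t ?_
    filter_upwards [hpos] with n hn
    refine ENNReal.ofReal_le_ofReal ?_
    rw [div_le_iff₀ (by positivity), hm']
    linarith [h2 _ hn.le]
  have := integrable_of_lintegral_lt_top (F := F) (f := fun x => x ^ 2 / 2) (by fun_prop)
    (Eventually.of_forall fun x => by positivity) (hle.trans_lt ENNReal.ofReal_lt_top)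
  simpa using this.mul_const 2

/-- A continuity theorem: if the means are bounded, a pointwise limit of transforms is a transform.
Markov's inequality gives tightness, Prokhorov's theorem a weak limit along an ultrafilter. -/
lemma exists_weak_limit {F : ℕ → ProbabilityMeasure ℝ≥0} {μ : ℝ≥0} {φ : ℝ → ℝ}
    (hm : ∀ n, ∫⁻ x : ℝ≥0, (x : ℝ≥0∞) ∂(F n : Measure ℝ≥0) ≤ μ)
    (hφ : ∀ s, 0 ≤ s → Tendsto (fun n => LS ((F n : Measure ℝ≥0).map (↑)) s) atTop (𝓝 (φ s))) :
    ∃ G : ProbabilityMeasure ℝ≥0, ∀ s, 0 ≤ s → LS ((G : Measure ℝ≥0).map (↑)) s = φ s := by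
  have hu : Tendsto (fun n : ℕ => μ / ((n : ℝ≥0) + 1)) atTop (𝓝 0) := by
    have := (tendsto_one_div_add_atTop_nhds_zero_nat (𝕜 := ℝ)).const_mul (μ : ℝ)
    rw [← NNReal.tendsto_coe]
    simpa [div_eq_mul_inv] using this
  have hc := isCompact_setOfPred_probabilityMeasure_mass_eq_compl_isCompact_le (E := ℝ≥0)
    (K := fun n => Set.Icc 0 ((n : ℝ≥0) + 1)) hu (fun n => isCompact_Icc) (Or.inl inferInstance)
  have hmem : ∀ k, F k ∈ {P : ProbabilityMeasure ℝ≥0 |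
      ∀ n : ℕ, P (Set.Icc 0 ((n : ℝ≥0) + 1))ᶜ ≤ μ / ((n : ℝ≥0) + 1)} := by
    intro k n
    rw [← ENNReal.coe_le_coe, ProbabilityMeasure.ennreal_coeFn_eq_coeFn_toMeasure,
      ENNReal.coe_div (by positivity), ENNReal.le_div_iff_mul_le (by simp) (by simp)]
    refine le_trans ?_ (hm k)
    rw [mul_comm]
    refine le_trans ?_ (mul_meas_ge_le_lintegral (by fun_prop) (((n : ℝ≥0) + 1 : ℝ≥0) : ℝ≥0∞))
    gcongr
    intro x hx
    simp only [Set.mem_compl_iff, Set.mem_Icc, zero_le, true_and, not_le] at hx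
    exact ENNReal.coe_le_coe.2 hx.le
  obtain ⟨U, hU⟩ : ∃ U : Ultrafilter ℕ, (U : Filter ℕ) ≤ atTop := Ultrafilter.exists_le atTop
  obtain ⟨G, -, hG⟩ := hc.ultrafilter_le_nhds (U.map F) (by
    rw [le_principal_iff]
    exact mem_map.2 (univ_mem' hmem))
  refine ⟨G, fun s hs => ?_⟩
  refine tendsto_nhds_unique ?_ ((hφ s hs).mono_left hU)
  let f : BoundedContinuousFunction ℝ≥0 ℝ := BoundedContinuousFunction.ofNormedAddCommGroup
    (fun x : ℝ≥0 => Real.exp (-(s * (x : ℝ)))) (by fun_prop) 1 (fun x => by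
      rw [Real.norm_eq_abs, Real.abs_exp, Real.exp_le_one_iff]
      have := mul_nonneg hs x.2
      linarith [show s * (x : ℝ) ≥ 0 from this])
  have hG' : Tendsto F U (𝓝 G) := hG
  have := ProbabilityMeasure.tendsto_iff_forall_integral_tendsto.1 hG' f
  simp only [LS_map_coe]
  exact this

/-- Iterating the functional equation from the point mass at `μ` converges to a solution. -/
lemma exists_sol {μ p : ℝ} (hμ : 0 < μ) (hp : 0 < p) (hp1 : p < 1)
    {FA : Measure ℝ} [IsProbabilityMeasure FA] (hA : FA (Set.Iio 0) = 0)
    (hiA : Integrable (fun a => a) FA) (hEA : ∫ a, a ∂FA = 1)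
    (hiA2 : Integrable (fun a => a ^ 2) FA) : ∃ F, Sol FA μ p F := by
  choose T hT using fun F => exists_step hp hA F
  let F : ℕ → ProbabilityMeasure ℝ≥0 := fun n => T^[n] ⟨Measure.dirac μ.toNNReal, inferInstance⟩
  let φ : ℕ → ℝ → ℝ := fun n s => LS ((F n : Measure ℝ≥0).map (↑)) s
  have hrec : ∀ n s, 0 ≤ s → φ (n + 1) s = LS FA ((1 - φ n (p * s)) / p) := by
    intro n s hs
    have : F (n + 1) = T (F n) := Function.iterate_succ_apply' _ _ _
    simp only [φ, this]
    exact hT (F n) s hs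
  have hφ1 : ∀ n s, 0 ≤ s → φ n s ≤ 1 := fun n s hs => LS_le_one (map_coe_Iio _) hs
  set V := ∫ a, a ^ 2 ∂FA with hV
  have hV0 : 0 ≤ V := integral_nonneg fun a => sq_nonneg a
  have h1p : 0 < 1 - p := by linarith
  -- the bound `C` reproduces itself under one step because `p * C + V * μ ^ 2 / 2 ≤ C`
  obtain ⟨C, hC0, hC1, hC2⟩ : ∃ C : ℝ, 0 ≤ C ∧ μ ^ 2 / 2 ≤ C ∧ p * C + V * μ ^ 2 / 2 ≤ C := by
    refine ⟨(V + 1) * μ ^ 2 / (2 * (1 - p)), by positivity, ?_, ?_⟩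
    · rw [le_div_iff₀ (by positivity)]
      nlinarith [mul_nonneg hV0 (sq_nonneg μ), mul_nonneg hp.le (sq_nonneg μ)]
    · have : (V + 1) * μ ^ 2 / (2 * (1 - p)) * (1 - p) = (V + 1) * μ ^ 2 / 2 := by
        field_simp
      nlinarith [sq_nonneg μ]
  have hbd : ∀ n s, 0 ≤ s → 1 - μ * s ≤ φ n s ∧ φ n s ≤ 1 - μ * s + C * s ^ 2 := by
    intro n
    induction n with
    | zero =>
      intro s hs
      have : φ 0 s = Real.exp (-(μ * s)) := by
        simp only [φ, F, LS_map_coe, Function.iterate_zero, id, ProbabilityMeasure.coe_mk]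
        rw [integral_dirac, Real.coe_toNNReal _ hμ.le, mul_comm]
      rw [this]
      refine ⟨one_sub_le_exp_neg _, (exp_neg_le_quadratic (by positivity)).trans ?_⟩
      nlinarith [mul_le_mul_of_nonneg_right hC1 (sq_nonneg s)]
    | succ n ih =>
      intro s hs
      have hps : 0 ≤ p * s := by positivity
      obtain ⟨l, u⟩ := ih (p * s) hps
      rw [hrec n s hs]
      set g := (1 - φ n (p * s)) / p with hg
      have hg0 : 0 ≤ g := div_nonneg (by linarith [hφ1 n (p * s) hps]) hp.le
      have hgu : g ≤ μ * s := by rw [hg, div_le_iff₀ hp]; linarith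
      have hgl : μ * s - p * C * s ^ 2 ≤ g := by rw [hg, le_div_iff₀ hp]; linarith
      have a1 := one_sub_le_LS hA hiA hg0
      have a2 := LS_le_quadratic hA hiA hiA2 hg0
      rw [hEA, mul_one] at a1 a2
      refine ⟨by linarith, ?_⟩
      have hg2 : g ^ 2 ≤ (μ * s) ^ 2 := by gcongr
      have b1 : g ^ 2 / 2 * V ≤ (μ * s) ^ 2 / 2 * V := by gcongr
      nlinarith [mul_le_mul_of_nonneg_right hC2 (sq_nonneg s)]
  have hLip : ∀ {x y : ℝ}, x ≤ 1 → y ≤ 1 →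
      |LS FA ((1 - x) / p) - LS FA ((1 - y) / p)| ≤ |x - y| / p := by
    intro x y hx hy
    have := abs_LS_sub_le hA hiA (div_nonneg (sub_nonneg.2 hx) hp.le)
      (div_nonneg (sub_nonneg.2 hy) hp.le)
    rwa [hEA, mul_one, ← sub_div, abs_div, abs_of_pos hp, sub_sub_sub_cancel_left,
      abs_sub_comm y] at this
  have hcon : ∀ n s, 0 ≤ s → |φ n s - φ (n + 1) s| ≤ C * s ^ 2 * p ^ n := by
    intro n
    induction n with
    | zero =>
      intro s hs
      obtain ⟨l, u⟩ := hbd 0 s hs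
      obtain ⟨l', u'⟩ := hbd 1 s hs
      rw [abs_le]
      constructor <;> simp <;> linarith
    | succ n ih =>
      intro s hs
      have hps : 0 ≤ p * s := by positivity
      rw [hrec n s hs, hrec (n + 1) s hs]
      refine (hLip (hφ1 _ _ hps) (hφ1 _ _ hps)).trans ?_
      rw [div_le_iff₀ hp]
      refine (ih (p * s) hps).trans_eq ?_
      ring
  have hlim : ∀ s, ∃ y, 0 ≤ s → Tendsto (fun n => φ n s) atTop (𝓝 y) := by
    intro s
    by_cases hs : 0 ≤ s
    · have := cauchySeq_of_le_geometric p (C * s ^ 2) hp1 (f := fun n => φ n s) fun n => hcon n s hs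
      obtain ⟨y, hy⟩ := cauchySeq_tendsto_of_complete this
      exact ⟨y, fun _ => hy⟩
    · exact ⟨0, fun h => absurd h hs⟩
  choose ψ hψ using hlim
  obtain ⟨G, hG⟩ := exists_weak_limit (F := F) (μ := μ.toNNReal) (φ := ψ) (fun n => by
    have := (moments_of_LS_bounds (map_coe_Iio (F n : Measure ℝ≥0)) hμ.le
      (fun s hs => (hbd n s hs).1) (fun s hs => (hbd n s hs).2)).1
    rw [lintegral_map (by fun_prop) (by fun_prop)] at this
    simp only [ENNReal.ofReal_coe_nnreal] at this
    exact this.le) hψ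
  have hψ1 : ∀ s, 0 ≤ s → ψ s ≤ 1 := fun s hs => le_of_tendsto' (hψ s hs) fun n => hφ1 n s hs
  have hGm := moments_of_LS_bounds (map_coe_Iio (G : Measure ℝ≥0)) (C := C) hμ.le
    (fun s hs => by
      rw [hG s hs]; exact ge_of_tendsto' (hψ s hs) fun n => (hbd n s hs).1)
    (fun s hs => by
      rw [hG s hs]; exact le_of_tendsto' (hψ s hs) fun n => (hbd n s hs).2)
  refine ⟨(G : Measure ℝ≥0).map (↑), inferInstance, map_coe_Iio _, hGm.2.1, hGm.2.2, ?_⟩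
  intro s hs
  have hps : 0 ≤ p * s := by positivity
  suffices h : ψ s = LS FA ((1 - ψ (p * s)) / p) by
    rw [hG s hs, hG _ hps, h]
    simp only [LS, mul_comm]
  refine tendsto_nhds_unique ((hψ s hs).comp (tendsto_add_atTop_nat 1)) ?_
  rw [tendsto_iff_dist_tendsto_zero]
  have h0 : Tendsto (fun n => |φ n (p * s) - ψ (p * s)| / p) atTop (𝓝 0) := by
    have := (((hψ _ hps).sub_const (ψ (p * s))).abs).div_const p
    simpa using this
  refine squeeze_zero (fun _ => dist_nonneg) (fun n => ?_) h0
  simp only [Function.comp, hrec n s hs, Real.dist_eq]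
  exact hLip (hφ1 _ _ hps) (hψ1 _ hps)

/-- Corollary 4: `E[A] = 1` and `E[A²] < ∞` hold iff the functional equation has exactly one
solution with mean `μ` and finite second moment; moreover, the solution has
variance `((Var[A] + p)/(1 − p)) μ²`. -/
theorem stmt4 (μ p : ℝ) (hμ : 0 < μ) (hp : 0 < p) (hp1 : p < 1)
    (FA : Measure ℝ) [IsProbabilityMeasure FA] (hA : FA (Set.Iio 0) = 0) :
    (((∫⁻ a, ENNReal.ofReal a ∂FA) = 1 ∧ (∫⁻ a, ENNReal.ofReal (a ^ 2) ∂FA) < ⊤) ↔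
      (∃! F : Measure ℝ, Sol FA μ p F)) ∧
    (((∫⁻ a, ENNReal.ofReal a ∂FA) = 1 ∧ (∫⁻ a, ENNReal.ofReal (a ^ 2) ∂FA) < ⊤) →
      ∀ F : Measure ℝ, Sol FA μ p F →
        (∫ x, x ^ 2 ∂F) - (∫ x, x ∂F) ^ 2 =
          (((∫ a, a ^ 2 ∂FA) - (∫ a, a ∂FA) ^ 2) + p) / (1 - p) * μ ^ 2) := by
  have conv : (∫⁻ a, ENNReal.ofReal a ∂FA) = 1 → Integrable (fun a => a) FA ∧ ∫ a, a ∂FA = 1 := by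
    intro h
    refine ⟨integrable_of_lintegral_lt_top measurable_id (ae_nonneg_of_Iio hA) (by simp [h]), ?_⟩
    rw [integral_eq_lintegral_of_nonneg_ae (ae_nonneg_of_Iio hA) (by fun_prop), h]
    simp
  refine ⟨⟨fun ⟨h1, h2⟩ => ?_, fun ⟨F, hF, _⟩ => ?_⟩, fun ⟨h1, h2⟩ F hF => ?_⟩
  · obtain ⟨hi, hE⟩ := conv h1
    have hi2 : Integrable (fun a => a ^ 2) FA :=
      integrable_of_lintegral_lt_top (by fun_prop) (Eventually.of_forall fun a => sq_nonneg a) h2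
    obtain ⟨F, hF⟩ := exists_sol hμ hp hp1 hA hi hE hi2
    exact ⟨F, hF, fun G hG => hG.unique hp hp1 hA hi hE hF⟩
  · obtain ⟨h1, h2⟩ := moments_of_sol hμ hp hA hF
    refine ⟨h1, ?_⟩
    have hi2 : Integrable (fun a => a ^ 2 / 2) FA :=
      integrable_of_lintegral_lt_top (by fun_prop)
        (Eventually.of_forall fun a => by positivity) (h2 ▸ ENNReal.ofReal_lt_top)
    have hi2' : Integrable (fun a => a ^ 2) FA := by simpa using hi2.mul_const 2
    exact (hasFiniteIntegral_iff_ofReal (Eventually.of_forall fun a => sq_nonneg a)).1 hi2'.2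
  · obtain ⟨-, hE⟩ := conv h1
    obtain ⟨-, h3⟩ := moments_of_sol hμ hp hA hF
    have h1p : 0 < 1 - p := by linarith
    have hm2 : 0 ≤ ∫ x, x ^ 2 ∂F := integral_nonneg fun x => sq_nonneg x
    have h4 : ∫ a, a ^ 2 / 2 ∂FA = (∫ x, x ^ 2 ∂F) * (1 - p) / (2 * μ ^ 2) := by
      rw [integral_eq_lintegral_of_nonneg_ae (Eventually.of_forall fun a => by positivity)
        (by fun_prop), h3, ENNReal.toReal_ofReal (by positivity)]
    rw [integral_div] at h4
    have h5 : ∫ a, a ^ 2 ∂FA = (∫ x, x ^ 2 ∂F) * (1 - p) / μ ^ 2 := by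
      have : ∫ a, a ^ 2 ∂FA = 2 * ((∫ a, a ^ 2 ∂FA) / 2) := by ring
      rw [this, h4]; field_simp
    rw [hE, hF.2.2.1, h5]
    field_simp
    ring
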